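/- Simson–Wallace line theorem: if S is a point on the circumcircle of triangle V₁V₂V₄, then the feet of the perpendiculars from S to the three edge-lines V₂V₄, V₄V₁, V₁V₂ are collinear. -/

import Mathlib

open RealInnerProductSpace

/-!
Let `S = ∑ wᵢ pᵢ` be an affine combination of points `pᵢ` lying with `S` on a sphere of centre `O`.
As `‖pᵢ - S‖² = 2 ⟪pᵢ - S, O - S⟫`, the inner product of `∑ wᵢ (pᵢ - S) = 0` with a suitable vector
gives `∑ wᵢ ⟪pᵢ - S, pᵢ - X⟫ = 0` for every point `X`. Taking `X = pⱼ`, the matrix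
`⟪pᵢ - S, pᵢ - pⱼ⟫` is singular. For three points its diagonal vanishes, so its determinant is the
sum of two triple products; up to the squared side lengths these are `∏ tᵢ` and `∏ (1 - tᵢ)`, with
`tᵢ` the parameters of the feet of `S` on the sides. The feet are therefore collinear by Menelaus.
-/

section Affine

open AffineMap (lineMap)

variable {k V P : Type*} [AddCommGroup V] [AddTorsor V P]

lemma exists_lineMap_eq_of_collinear [DivisionRing k] [Module k V] {A B F : P} (hAB : A ≠ B)
    (h : Collinear k {A, B, F}) : ∃ t : k, lineMap A B t = F :=
  mem_affineSpan_pair_iff_exists_lineMap_eq.mp <|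
    h.mem_affineSpan_of_mem_of_ne (by simp) (by simp) (by simp) hAB

lemma affineIndependent_triple_iff_linearIndependent_vsub [Ring k] [Module k V] {p₁ p₂ p₃ : P} :
    AffineIndependent k ![p₁, p₂, p₃] ↔ LinearIndependent k ![p₂ -ᵥ p₁, p₃ -ᵥ p₁] := by
  rw [affineIndependent_iff_linearIndependent_vsub k _ (0 : Fin 3),
    ← linearIndependent_equiv (finSuccAboveEquiv (0 : Fin 3))]
  convert! Iff.rfl
  ext i
  fin_cases i <;> rfl

/-- **Menelaus's theorem**, with the denominators of the ratios cleared so that the points may also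
be vertices. -/
lemma affineIndependent_lineMap_iff [CommRing k] [IsDomain k] [Module k V] {A B C : P} {r s t : k} :
    AffineIndependent k ![lineMap B C r, lineMap C A s, lineMap A B t] ↔
      AffineIndependent k ![A, B, C] ∧ r * s * t + (1 - r) * (1 - s) * (1 - t) ≠ 0 := by
  have hs : lineMap C A s -ᵥ lineMap B C r = (r - 1) • (B -ᵥ A) + (1 - r - s) • (C -ᵥ A) := by
    rw [← vsub_sub_vsub_cancel_right _ _ A]
    simp only [AffineMap.lineMap_vsub, vsub_self, AffineMap.lineMap_apply_module]
    module
  have ht : lineMap A B t -ᵥ lineMap B C r = (t + r - 1) • (B -ᵥ A) + (-r) • (C -ᵥ A) := by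
    rw [← vsub_sub_vsub_cancel_right _ _ A]
    simp only [AffineMap.lineMap_vsub, vsub_self, AffineMap.lineMap_apply_module]
    module
  have hdet : (r - 1) * -r - (1 - r - s) * (t + r - 1) =
      r * s * t + (1 - r) * (1 - s) * (1 - t) := by ring
  rw [affineIndependent_triple_iff_linearIndependent_vsub, hs, ht,
    LinearIndependent.pair_add_smul_add_smul_iff,
    affineIndependent_triple_iff_linearIndependent_vsub, ← sub_ne_zero, hdet]

end Affine

section Euclidean

open AffineMap (lineMap)

variable {V P : Type*} [NormedAddCommGroup V] [InnerProductSpace ℝ V] [MetricSpace P]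
  [NormedAddTorsor V P]

lemma mul_norm_sq_eq_inner_of_inner_vsub_lineMap_eq_zero {A B S : P} {t : ℝ}
    (h : ⟪S -ᵥ lineMap A B t, B -ᵥ A⟫ = 0) :
    t * ‖B -ᵥ A‖ ^ 2 = ⟪A -ᵥ S, A -ᵥ B⟫ := by
  rw [AffineMap.lineMap_apply, vsub_vadd_eq_vsub_sub, inner_sub_left, real_inner_smul_left,
    real_inner_self_eq_norm_sq] at h
  rw [← neg_vsub_eq_vsub_rev S A, ← neg_vsub_eq_vsub_rev B A, inner_neg_neg]
  linear_combination -h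

lemma one_sub_mul_norm_sq_eq_inner_of_inner_vsub_lineMap_eq_zero {A B S : P} {t : ℝ}
    (h : ⟪S -ᵥ lineMap A B t, B -ᵥ A⟫ = 0) :
    (1 - t) * ‖B -ᵥ A‖ ^ 2 = ⟪B -ᵥ S, B -ᵥ A⟫ := by
  have h' : ⟪S -ᵥ lineMap B A (1 - t), A -ᵥ B⟫ = 0 := by
    rw [AffineMap.lineMap_apply_one_sub, ← neg_vsub_eq_vsub_rev B A, inner_neg_right, h, neg_zero]
  rw [← mul_norm_sq_eq_inner_of_inner_vsub_lineMap_eq_zero h', ← neg_vsub_eq_vsub_rev, norm_neg]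

lemma exists_lineMap_eq_and_mul_norm_sq_eq_inner {A B S F : P} (hAB : A ≠ B)
    (hF : Collinear ℝ {A, B, F}) (hperp : ⟪S -ᵥ F, B -ᵥ A⟫ = 0) :
    ∃ t : ℝ, lineMap A B t = F ∧ t * ‖B -ᵥ A‖ ^ 2 = ⟪A -ᵥ S, A -ᵥ B⟫ ∧
      (1 - t) * ‖B -ᵥ A‖ ^ 2 = ⟪B -ᵥ S, B -ᵥ A⟫ := by
  obtain ⟨t, rfl⟩ := exists_lineMap_eq_of_collinear hAB hF
  exact ⟨t, rfl, mul_norm_sq_eq_inner_of_inner_vsub_lineMap_eq_zero hperp,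
    one_sub_mul_norm_sq_eq_inner_of_inner_vsub_lineMap_eq_zero hperp⟩

lemma norm_vsub_sq_eq_two_mul_inner_of_dist_eq {O S X : P} (h : dist O X = dist O S) :
    ‖X -ᵥ S‖ ^ 2 = 2 * ⟪X -ᵥ S, O -ᵥ S⟫ := by
  have hO := AffineSubspace.mem_perpBisector_iff_inner_eq.mp
    (AffineSubspace.mem_perpBisector_iff_dist_eq.mpr h.symm)
  rw [dist_comm, dist_eq_norm_vsub V, real_inner_comm] at hO
  linear_combination -2 * hO

variable {ι : Type*} [Fintype ι] {p : ι → P} {O S : P}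

lemma sum_mul_inner_vsub_vsub_eq_zero {w : ι → ℝ} (hw : ∑ i, w i = 1)
    (hS : Finset.univ.affineCombination ℝ p w = S) (hp : ∀ i, dist O (p i) = dist O S) (X : P) :
    ∑ i, w i * ⟪p i -ᵥ S, p i -ᵥ X⟫ = 0 := by
  have hsum : ∑ i, w i • (p i -ᵥ S) = 0 := by
    rw [Finset.sum_smul_vsub_const_eq_affineCombination_vsub _ _ _ _ hw, hS, vsub_self]
  calc ∑ i, w i * ⟪p i -ᵥ S, p i -ᵥ X⟫
      = ∑ i, ⟪w i • (p i -ᵥ S), (2 : ℝ) • (O -ᵥ S) + (S -ᵥ X)⟫ := by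
        refine Finset.sum_congr rfl fun i _ ↦ ?_
        rw [← vsub_add_vsub_cancel (p i) S X, inner_add_right, real_inner_self_eq_norm_sq,
          norm_vsub_sq_eq_two_mul_inner_of_dist_eq (hp i), real_inner_smul_left, inner_add_right,
          real_inner_smul_right]
    _ = 0 := by rw [← sum_inner, hsum, inner_zero_left]

lemma det_inner_vsub_vsub_eq_zero [DecidableEq ι] (hS : S ∈ affineSpan ℝ (Set.range p))
    (hp : ∀ i, dist O (p i) = dist O S) :
    (Matrix.of fun i j ↦ ⟪p i -ᵥ S, p i -ᵥ p j⟫).det = 0 := by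
  obtain ⟨w, hw, hwS⟩ := eq_affineCombination_of_mem_affineSpan_of_fintype hS
  have hw₀ : w ≠ 0 := by
    rintro rfl
    simp at hw
  refine Matrix.exists_vecMul_eq_zero_iff.mp ⟨w, hw₀, funext fun j ↦ ?_⟩
  exact sum_mul_inner_vsub_vsub_eq_zero hw hwS.symm hp (p j)

lemma inner_mul_inner_mul_inner_add_eq_zero_of_dist_eq {A B C : P}
    (hS : S ∈ affineSpan ℝ (Set.range ![A, B, C])) (hA : dist O A = dist O S)
    (hB : dist O B = dist O S) (hC : dist O C = dist O S) :
    ⟪B -ᵥ S, B -ᵥ C⟫ * ⟪C -ᵥ S, C -ᵥ A⟫ * ⟪A -ᵥ S, A -ᵥ B⟫ +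
      ⟪C -ᵥ S, C -ᵥ B⟫ * ⟪A -ᵥ S, A -ᵥ C⟫ * ⟪B -ᵥ S, B -ᵥ A⟫ = 0 := by
  have hdet := det_inner_vsub_vsub_eq_zero hS (O := O) (by simp [Fin.forall_fin_succ, hA, hB, hC])
  simp only [Matrix.det_fin_three, Matrix.of_apply, Matrix.cons_val, vsub_self,
    inner_zero_right] at hdet
  linear_combination hdet

theorem stmt_6_general (V₁ V₂ V₄ O S F₁ F₂ F₃ : P)
    (htri : AffineIndependent ℝ ![V₁, V₂, V₄])
    (hSmem : S ∈ affineSpan ℝ (Set.range ![V₁, V₂, V₄]))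
    (hO1 : dist O V₁ = dist O V₂) (hO2 : dist O V₂ = dist O V₄)
    (hS : dist O S = dist O V₁)
    (hF₁ : Collinear ℝ {V₂, V₄, F₁} ∧ ⟪S -ᵥ F₁, V₄ -ᵥ V₂⟫ = 0)
    (hF₂ : Collinear ℝ {V₄, V₁, F₂} ∧ ⟪S -ᵥ F₂, V₁ -ᵥ V₄⟫ = 0)
    (hF₃ : Collinear ℝ {V₁, V₂, F₃} ∧ ⟪S -ᵥ F₃, V₂ -ᵥ V₁⟫ = 0) :
    Collinear ℝ {F₁, F₂, F₃} := by
  have h₂₄ : V₂ ≠ V₄ := htri.injective.ne (by decide : (1 : Fin 3) ≠ 2)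
  have h₄₁ : V₄ ≠ V₁ := htri.injective.ne (by decide : (2 : Fin 3) ≠ 0)
  have h₁₂ : V₁ ≠ V₂ := htri.injective.ne (by decide : (0 : Fin 3) ≠ 1)
  obtain ⟨t₁, rfl, ht₁, ht₁'⟩ := exists_lineMap_eq_and_mul_norm_sq_eq_inner h₂₄ hF₁.1 hF₁.2
  obtain ⟨t₂, rfl, ht₂, ht₂'⟩ := exists_lineMap_eq_and_mul_norm_sq_eq_inner h₄₁ hF₂.1 hF₂.2
  obtain ⟨t₃, rfl, ht₃, ht₃'⟩ := exists_lineMap_eq_and_mul_norm_sq_eq_inner h₁₂ hF₃.1 hF₃.2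
  have hprod := inner_mul_inner_mul_inner_add_eq_zero_of_dist_eq hSmem hS.symm
    (hS.trans hO1).symm ((hS.trans hO1).trans hO2).symm
  rw [← ht₁, ← ht₂, ← ht₃, ← ht₁', ← ht₂', ← ht₃'] at hprod
  have hsides : ‖V₄ -ᵥ V₂‖ ^ 2 * ‖V₁ -ᵥ V₄‖ ^ 2 * ‖V₂ -ᵥ V₁‖ ^ 2 ≠ 0 := by
    simp [h₂₄.symm, h₄₁.symm, h₁₂.symm]
  have hmenelaus : t₁ * t₂ * t₃ + (1 - t₁) * (1 - t₂) * (1 - t₃) = 0 :=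
    mul_right_cancel₀ hsides (by linear_combination hprod)
  exact collinear_iff_not_affineIndependent_set.mpr fun h ↦
    (affineIndependent_lineMap_iff.mp h).2 hmenelaus

end Euclidean

/-- Simson–Wallace line theorem: if `S` is a point on the circumcircle (centre `O`) of
triangle `V₁V₂V₄`, then the feet `F₁, F₂, F₃` of the perpendiculars from `S` to the
three edge-lines `V₂V₄`, `V₄V₁`, `V₁V₂` are collinear.  Each foot is characterized by
lying on the edge-line and by the perpendicularity of `S - foot` to the edge. -/
theorem stmt_6 (V₁ V₂ V₄ O S F₁ F₂ F₃ : EuclideanSpace ℝ (Fin 2))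
    (htri : AffineIndependent ℝ ![V₁, V₂, V₄])
    (hO1 : dist O V₁ = dist O V₂) (hO2 : dist O V₂ = dist O V₄)
    (hS : dist O S = dist O V₁)
    (hF₁ : Collinear ℝ ({V₂, V₄, F₁} : Set (EuclideanSpace ℝ (Fin 2))) ∧
      ⟪S - F₁, V₄ - V₂⟫ = 0)
    (hF₂ : Collinear ℝ ({V₄, V₁, F₂} : Set (EuclideanSpace ℝ (Fin 2))) ∧
      ⟪S - F₂, V₁ - V₄⟫ = 0)
    (hF₃ : Collinear ℝ ({V₁, V₂, F₃} : Set (EuclideanSpace ℝ (Fin 2))) ∧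
      ⟪S - F₃, V₂ - V₁⟫ = 0) :
    Collinear ℝ ({F₁, F₂, F₃} : Set (EuclideanSpace ℝ (Fin 2))) := by
  have hspan : affineSpan ℝ (Set.range ![V₁, V₂, V₄]) = ⊤ :=
    htri.affineSpan_eq_top_iff_card_eq_finrank_add_one.mpr (by simp)
  exact stmt_6_general V₁ V₂ V₄ O S F₁ F₂ F₃ htri (hspan ▸ AffineSubspace.mem_top ℝ _ S)
    hO1 hO2 hS hF₁ hF₂ hF₃
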